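/- arXiv:2508.07391 — 4 statements merged into one kernel-verified Lean document; each statement's English description precedes it below -/
import Mathlib

section
/- For every real number a with 0 < a < 1/2, the quantity θ(a) = a - 1/2 + (1/2)·√((1-2a)/(1+2a)) is strictly less than 1/6. -/
/-!
With `x = 2a ∈ (0, 1)` the claim reads `√((1 - x)/(1 + x)) < 4/3 - x`. The right side is positive,
so squaring reduces it to `0 < (1 + x)(4/3 - x)² - (1 - x)`, and this cubic equals
`2/9 + (1 - x)(2/9 + (1 - x)(1/3 + x))`, visibly positive on `(0, 1)`.
-/

/-- For `a ∈ [0, 1/2]`, the quantity `θ(a) = a - 1/2 + (1/2)·√((1-2a)/(1+2a))`. -/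
noncomputable def theta (a : ℝ) : ℝ :=
  a - 1 / 2 + (1 / 2) * Real.sqrt ((1 - 2 * a) / (1 + 2 * a))

/-- For every real `a` with `0 < a < 1/2`, `θ(a) < 1/6`. -/
theorem theta_lt_one_sixth (a : ℝ) (h0 : 0 < a) (h1 : a < 1 / 2) :
    theta a < 1 / 6 := by
  have key : Real.sqrt ((1 - 2 * a) / (1 + 2 * a)) < 4 / 3 - 2 * a := by
    rw [Real.sqrt_lt' (by linarith), div_lt_iff₀ (by linarith)]
    have hx : 0 < 1 - 2 * a := by linarith
    have hpos : 0 < 2 / 9 + (1 - 2 * a) * (2 / 9 + (1 - 2 * a) * (1 / 3 + 2 * a)) := by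
      positivity
    linear_combination hpos
  unfold theta
  linarith
end

section
/- For every natural number l ≥ 2, setting a₁ = (l+1)/(4l), a₂ = (l-1)/(4l), a₃ = 1/4, one has 0 < aᵢ < 1/2 for each i, the sum satisfies a₁ + a₂ + a₃ - 1/2 = 1/4, and 1/4 > θ(aᵢ) for each i ∈ {1,2,3}. -/
lemma theta_lt_quarter {a : ℝ} (h0 : 0 < a) (h1 : a < 1 / 2) : theta a < 1 / 4 := by
  have h : Real.sqrt ((1 - 2 * a) / (1 + 2 * a)) < 3 / 2 - 2 * a := by
    rw [Real.sqrt_lt' (by linarith), div_lt_iff₀ (by linarith)]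
    have : 0 ≤ a * (1 - 2 * a) ^ 2 := by positivity
    nlinarith
  unfold theta
  linarith

/-- For every natural `l ≥ 2`, with `a₁ = (l+1)/(4l)`, `a₂ = (l-1)/(4l)`, `a₃ = 1/4`
(the parameters of the generalized Wallach space `SU(2l)/U(l)`), one has
`0 < aᵢ < 1/2` for each `i`, `a₁ + a₂ + a₃ - 1/2 = 1/4`, and `1/4 > θ(aᵢ)` for each `i`. -/
theorem su2l_ul_params (l : ℕ) (hl : 2 ≤ l)
    (a₁ a₂ a₃ : ℝ)
    (ha₁ : a₁ = ((l : ℝ) + 1) / (4 * l)) (ha₂ : a₂ = ((l : ℝ) - 1) / (4 * l))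
    (ha₃ : a₃ = 1 / 4) :
    (0 < a₁ ∧ a₁ < 1 / 2) ∧ (0 < a₂ ∧ a₂ < 1 / 2) ∧ (0 < a₃ ∧ a₃ < 1 / 2) ∧
      a₁ + a₂ + a₃ - 1 / 2 = 1 / 4 ∧
      1 / 4 > theta a₁ ∧ 1 / 4 > theta a₂ ∧ 1 / 4 > theta a₃ := by
  have hl' : (2 : ℝ) ≤ l := by exact_mod_cast hl
  have hl0 : (0 : ℝ) < 4 * l := by linarith
  have b₁ : 0 < a₁ ∧ a₁ < 1 / 2 := by
    rw [ha₁, div_lt_iff₀ hl0]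
    exact ⟨by positivity, by linarith⟩
  have b₂ : 0 < a₂ ∧ a₂ < 1 / 2 := by
    rw [ha₂, div_lt_iff₀ hl0]
    exact ⟨div_pos (by linarith) hl0, by linarith⟩
  have b₃ : 0 < a₃ ∧ a₃ < 1 / 2 := by
    rw [ha₃]
    norm_num
  refine ⟨b₁, b₂, b₃, ?_, theta_lt_quarter b₁.1 b₁.2, theta_lt_quarter b₂.1 b₂.2,
    theta_lt_quarter b₃.1 b₃.2⟩
  rw [ha₁, ha₂, ha₃]
  have : (l : ℝ) ≠ 0 := by linarith
  field_simp
  ring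
end

section
/- Let a₀ be the unique real root of the cubic polynomial 4a³ + 4a² - 1. Then θ(a) ≤ θ(a₀) for every a ∈ [0, 1/2]; that is, θ attains its maximum over [0, 1/2] at a₀. -/
/-- Rationalization of `θ`: with `s = √((1-2a)/(1+2a))`, both `a` and `θ(a)` are rational
functions of `s`. -/
lemma theta_param {a : ℝ} (h0 : 0 ≤ a) (h1 : a ≤ 1 / 2) :
    ∃ s : ℝ, 0 ≤ s ∧ s ≤ 1 ∧ a = (1 - s ^ 2) / (2 * (1 + s ^ 2)) ∧
      theta a = s / 2 - s ^ 2 / (1 + s ^ 2) := by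
  have hpos : 0 < 1 + 2 * a := by linarith
  have hsq : Real.sqrt ((1 - 2 * a) / (1 + 2 * a)) ^ 2 = (1 - 2 * a) / (1 + 2 * a) :=
    Real.sq_sqrt (div_nonneg (by linarith) hpos.le)
  have hle : Real.sqrt ((1 - 2 * a) / (1 + 2 * a)) ≤ 1 :=
    Real.sqrt_le_one.mpr ((div_le_one hpos).mpr (by linarith))
  have hs0 := Real.sqrt_nonneg ((1 - 2 * a) / (1 + 2 * a))
  unfold theta
  generalize Real.sqrt ((1 - 2 * a) / (1 + 2 * a)) = s at hsq hle hs0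
  have ha : a = (1 - s ^ 2) / (2 * (1 + s ^ 2)) := by
    rw [eq_div_iff hpos.ne'] at hsq
    rw [eq_div_iff (by positivity)]
    linarith
  refine ⟨s, hs0, hle, ha, ?_⟩
  rw [ha]
  field_simp
  ring

lemma cubic_root_mem {a : ℝ} (h : 4 * a ^ 3 + 4 * a ^ 2 - 1 = 0) : 0 < a ∧ a < 1 / 2 := by
  constructor
  · by_contra! ha
    -- `27(4a³ + 4a²) - 16 = 4(3a+2)²(3a-1)`, so the cubic is negative for `a ≤ 0`.
    nlinarith [mul_nonneg (sq_nonneg (3 * a + 2)) (by linarith : 0 ≤ 1 - 3 * a)]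
  · by_contra! ha
    nlinarith [mul_nonneg (sq_nonneg a) (by linarith : 0 ≤ a - 1 / 2)]

/-- In the parameter `t`, the cubic for `a₀` becomes the sextic
`(t³+t²+3t-1)(t³-t²+3t+1)`, whose second factor has no zero on `[0, 1]`. -/
lemma theta_param_root {t : ℝ} (h0 : 0 ≤ t) (h1 : t ≤ 1)
    (h : 4 * ((1 - t ^ 2) / (2 * (1 + t ^ 2))) ^ 3
      + 4 * ((1 - t ^ 2) / (2 * (1 + t ^ 2))) ^ 2 - 1 = 0) :
    t ^ 3 + t ^ 2 + 3 * t = 1 := by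
  have hprod : (t ^ 3 + t ^ 2 + 3 * t - 1) * (t ^ 3 - t ^ 2 + 3 * t + 1) = 0 := by
    field_simp at h
    linarith
  have hpos : 0 < t ^ 3 - t ^ 2 + 3 * t + 1 := by
    nlinarith [pow_nonneg h0 3, mul_nonneg h0 (sub_nonneg.mpr h1)]
  rcases mul_eq_zero.mp hprod with h | h <;> linarith

/-- If `a₀` is the (unique) real root of `4a³ + 4a² - 1`, then `θ` attains its maximum
over `[0, 1/2]` at `a₀`: `θ(a) ≤ θ(a₀)` for every `a ∈ [0, 1/2]`. -/
theorem theta_max_at_root (a₀ : ℝ) (h : 4 * a₀ ^ 3 + 4 * a₀ ^ 2 - 1 = 0) :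
    ∀ a ∈ Set.Icc (0 : ℝ) (1 / 2), theta a ≤ theta a₀ := by
  rintro a ⟨ha0, ha1⟩
  obtain ⟨hr0, hr1⟩ := cubic_root_mem h
  obtain ⟨s, hs0, hs1, -, hs⟩ := theta_param ha0 ha1
  obtain ⟨t, ht0, ht1, hat, ht⟩ := theta_param hr0.le hr1.le
  rw [hat] at h
  have hcub := theta_param_root ht0 ht1 h
  have htpos : 0 < t := by
    rcases ht0.eq_or_lt with h' | h'
    · rw [← h'] at hcub
      norm_num at hcub
    · exact h'
  have hfac : 0 ≤ (1 - t) ^ 2 - (1 + t ^ 2) * s * t := by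
    have := mul_nonneg (by positivity : 0 ≤ (1 + t ^ 2) * t) (sub_nonneg.mpr hs1)
    nlinarith [sq_nonneg t]
  have hdiff : (t / 2 - t ^ 2 / (1 + t ^ 2)) - (s / 2 - s ^ 2 / (1 + s ^ 2))
      = (t - s) ^ 2 * ((1 - t) ^ 2 - (1 + t ^ 2) * s * t)
        / (2 * t * (1 + s ^ 2) * (1 + t ^ 2)) := by
    field_simp
    -- The two sides differ by a multiple of `(1+t²)² - 4t = (t-1)(t³+t²+3t-1)`.
    linear_combination (s * (t - s) * (t - 1)) * hcub
  rw [hs, ht, ← sub_nonneg, hdiff]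
  positivity
end

section
/- Let a* be the unique real root of the cubic polynomial 32a³ + 16a² + 2a - 1. For every natural number k ≥ 2, the inequality k/(6k-4) ≥ a* holds if and only if k ≤ 16. -/
/-! The cubic is `2a(4a+1)² - 1`, so a real root is positive, and on the positive axis
`2a(4a+1)²` is strictly increasing. Its values at `17/98` and `4/23 = 16/92`, the parameters
for `k = 17` and `k = 16`, lie on either side of `1`, so the root lies in `(17/98, 4/23]`.
As `k/(6k-4)` decreases in `k`, the threshold falls between `16` and `17`. -/

/-- Let `a*` be the (unique) real root of `32a³ + 16a² + 2a - 1`. For every natural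
`k ≥ 2`, the inequality `k/(6k-4) ≥ a*` holds iff `k ≤ 16`. -/
theorem so3k_param_ge_aStar_iff (aStar : ℝ)
    (hroot : 32 * aStar ^ 3 + 16 * aStar ^ 2 + 2 * aStar - 1 = 0)
    (k : ℕ) (hk : 2 ≤ k) :
    (k : ℝ) / (6 * k - 4) ≥ aStar ↔ k ≤ 16 := by
  have hpos : 0 < aStar := by
    by_contra! h
    nlinarith [mul_nonneg (neg_nonneg.2 h) (sq_nonneg (4 * aStar + 1))]
  have hupper : aStar ≤ 4 / 23 := by
    by_contra! h
    have h2 : (4 / 23 : ℝ) ^ 2 < aStar ^ 2 := by gcongr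
    have h3 : (4 / 23 : ℝ) ^ 3 < aStar ^ 3 := by gcongr
    norm_num at h2 h3
    linarith
  have hlower : 17 / 98 < aStar := by
    by_contra! h
    have h2 : aStar ^ 2 ≤ (17 / 98 : ℝ) ^ 2 := by gcongr
    have h3 : aStar ^ 3 ≤ (17 / 98 : ℝ) ^ 3 := by gcongr
    norm_num at h2 h3
    linarith
  have hk' : (2 : ℝ) ≤ k := by exact_mod_cast hk
  have hden : (0 : ℝ) < 6 * k - 4 := by linarith
  constructor
  · intro h
    by_contra! hlt
    have hlt' : (17 : ℝ) ≤ k := by exact_mod_cast hlt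
    have : (k : ℝ) / (6 * k - 4) ≤ 17 / 98 := by
      rw [div_le_div_iff₀ hden (by norm_num)]
      linarith
    linarith
  · intro h
    have h' : (k : ℝ) ≤ 16 := by exact_mod_cast h
    have : (4 / 23 : ℝ) ≤ (k : ℝ) / (6 * k - 4) := by
      rw [div_le_div_iff₀ (by norm_num) hden]
      linarith
    linarith
end
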